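/- Let g > 0, h_∞ > 0 and c > 0 with c² > g h_∞, and set m = −c h_∞. Define h_c(ξ) = h_∞ + ((c² − g h_∞)/g) sech²( (ξ/(2 c h_∞)) √(3 (c² − g h_∞)) ) and u_c(ξ) = c + m/h_c(ξ). Then h(t,x) = h_c(x − c t), u(t,x) = u_c(x − c t) is a smooth solution of the 1D Serre–Green–Naghdi equations: h_t + (h u)_x = 0 and (h u)_t + (h u² + p)_x = 0, with p = g h²/2 + (h²/3) ḧ, ḣ = h_t + u h_x, ḧ = (ḣ)_t + u (ḣ)_x. -/

import Mathlib

/-!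
In the frame moving with the wave, mass conservation makes the discharge `H * (u - c)` a constant
`m`, and momentum conservation makes the flux `H * (u - c) ^ 2 + p` a constant `K`. Along a
travelling wave the material derivative is `(m / H) * d/dξ`, so that the flux is an expression in
`H`, `H'`, `H''`; it is constant as soon as `H` solves the first-order equation
`m² H'² / 3 = m² - 2 K H + 2 E H² - g H³` for some `E`, and the equation for `H''` obtained by
differentiating it. For the solitary wave the cubic has a double root: it is
`(H - h∞)² (c² - g H)`, and this is the equation satisfied by a `sech²` profile.
-/

noncomputable section

/-- Partial derivative in the time variable of a function of `(t, x)`. -/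
def pT2 (f : ℝ → ℝ → ℝ) : ℝ → ℝ → ℝ := fun t x => deriv (fun s => f s x) t

/-- Partial derivative in the space variable of a function of `(t, x)`. -/
def pX2 (f : ℝ → ℝ → ℝ) : ℝ → ℝ → ℝ := fun t x => deriv (fun s => f t s) x

/-- Smoothness of a function of `(t, x)`. -/
def Smooth2 (f : ℝ → ℝ → ℝ) : Prop :=
  ContDiff ℝ (⊤ : ℕ∞) (fun q : ℝ × ℝ => f q.1 q.2)

/-- The wave with profile `f` and speed `c`, as a function of `(t, x)`. -/
def travellingWave (c : ℝ) (f : ℝ → ℝ) : ℝ → ℝ → ℝ := fun t x => f (x - c * t)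

/-- The derivative `ḟ = fₜ + u fₓ` of `f` along the flow of the velocity field `u`. -/
def materialDeriv (u f : ℝ → ℝ → ℝ) : ℝ → ℝ → ℝ := fun t x => pT2 f t x + u t x * pX2 f t x

/-- The depth-integrated pressure `p = g h² / 2 + (h² / 3) ḧ` of the Serre–Green–Naghdi model. -/
def sgnPressure (g : ℝ) (h u : ℝ → ℝ → ℝ) : ℝ → ℝ → ℝ := fun t x =>
  g * h t x ^ 2 / 2 + h t x ^ 2 / 3 * materialDeriv u (materialDeriv u h) t x

/-- Smooth solutions, of positive depth, of the 1D Serre–Green–Naghdi equations on the whole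
`(t, x)` plane. -/
structure IsSGNSolution (g : ℝ) (h u : ℝ → ℝ → ℝ) : Prop where
  depth_pos : ∀ t x, 0 < h t x
  smooth_depth : Smooth2 h
  smooth_velocity : Smooth2 u
  mass_eq : ∀ t x, pT2 h t x + pX2 (fun t x => h t x * u t x) t x = 0
  momentum_eq : ∀ t x, pT2 (fun t x => h t x * u t x) t x
    + pX2 (fun t x => h t x * u t x ^ 2 + sgnPressure g h u t x) t x = 0

section TravellingWave

lemma pT2_travellingWave (c : ℝ) (f : ℝ → ℝ) :
    pT2 (travellingWave c f) = travellingWave c fun ξ => -c * deriv f ξ := by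
  funext t x
  have h := deriv_comp_mul_left c (fun y => f (x - y)) t
  rw [deriv_comp_const_sub, smul_eq_mul, mul_neg, ← neg_mul] at h
  exact h

lemma pX2_travellingWave (c : ℝ) (f : ℝ → ℝ) :
    pX2 (travellingWave c f) = travellingWave c (deriv f) := by
  funext t x
  exact deriv_comp_sub_const f (c * t) x

lemma smooth2_travellingWave (c : ℝ) {f : ℝ → ℝ} (hf : ContDiff ℝ (⊤ : ℕ∞) f) :
    Smooth2 (travellingWave c f) := by
  unfold Smooth2 travellingWave
  fun_prop

lemma materialDeriv_travellingWave (c : ℝ) (w f : ℝ → ℝ) :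
    materialDeriv (travellingWave c fun ξ => c + w ξ) (travellingWave c f) =
      travellingWave c fun ξ => w ξ * deriv f ξ := by
  funext t x
  simp only [materialDeriv, pT2_travellingWave, pX2_travellingWave, travellingWave]
  ring

variable {g m K : ℝ} {H : ℝ → ℝ}

lemma discharge_travellingWave (c m : ℝ) (hne : ∀ ξ, H ξ ≠ 0) :
    (fun t x => travellingWave c H t x * travellingWave c (fun ξ => c + m / H ξ) t x) =
      travellingWave c fun ξ => c * H ξ + m := by
  funext t x
  have := hne (x - c * t)
  simp only [travellingWave]
  field_simp

lemma sgnPressure_travellingWave (g c m : ℝ) (hH : Differentiable ℝ H)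
    (hH' : Differentiable ℝ (deriv H)) (hne : ∀ ξ, H ξ ≠ 0) :
    sgnPressure g (travellingWave c H) (travellingWave c fun ξ => c + m / H ξ) =
      travellingWave c fun ξ =>
        g * H ξ ^ 2 / 2 + m ^ 2 / 3 * (deriv (deriv H) ξ - deriv H ξ ^ 2 / H ξ) := by
  have deriv_hdot (ξ : ℝ) : deriv (fun ξ => m / H ξ * deriv H ξ) ξ =
      m / H ξ * (deriv (deriv H) ξ - deriv H ξ ^ 2 / H ξ) := by
    have := hne ξ
    refine ((((hasDerivAt_const ξ m).div (hH ξ).hasDerivAt this).mul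
      (hH' ξ).hasDerivAt).congr_deriv ?_).deriv
    simp only [Pi.div_apply]
    field_simp
    ring
  funext t x
  have := hne (x - c * t)
  simp only [sgnPressure, materialDeriv_travellingWave c (fun ξ => m / H ξ), travellingWave,
    deriv_hdot]
  field_simp

/-- The flux `H (u - c)² + p` of momentum in the frame moving with the wave of depth profile `H`,
speed `c` and velocity profile `u = c + m / H`; it does not depend on `c`. -/
def momentumFlux (g m : ℝ) (H : ℝ → ℝ) (ξ : ℝ) : ℝ :=
  m ^ 2 / H ξ + (g * H ξ ^ 2 / 2 + m ^ 2 / 3 * (deriv (deriv H) ξ - deriv H ξ ^ 2 / H ξ))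

theorem isSGNSolution_travellingWave (c : ℝ) (hH : ContDiff ℝ (⊤ : ℕ∞) H) (hpos : ∀ ξ, 0 < H ξ)
    (hflux : ∀ ξ, momentumFlux g m H ξ = K) :
    IsSGNSolution g (travellingWave c H) (travellingWave c fun ξ => c + m / H ξ) := by
  have hne (ξ : ℝ) : H ξ ≠ 0 := (hpos ξ).ne'
  have hdiff : Differentiable ℝ H := hH.differentiable (by simp)
  have hdiff' : Differentiable ℝ (deriv H) :=
    (contDiff_infty_iff_deriv.1 hH).2.differentiable (by simp)
  have flux_eq : (fun t x =>
      travellingWave c H t x * travellingWave c (fun ξ => c + m / H ξ) t x ^ 2 +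
        sgnPressure g (travellingWave c H) (travellingWave c fun ξ => c + m / H ξ) t x) =
      travellingWave c fun ξ => c ^ 2 * H ξ + (2 * c * m + K) := by
    rw [sgnPressure_travellingWave g c m hdiff hdiff' hne]
    funext t x
    have := hne (x - c * t)
    simp only [travellingWave, ← hflux (x - c * t), momentumFlux]
    field_simp
    ring
  refine ⟨fun _ _ => hpos _, smooth2_travellingWave c hH,
    smooth2_travellingWave c (contDiff_const.add (contDiff_const.div hH hne)),
    fun t x => ?_, fun t x => ?_⟩
  · rw [discharge_travellingWave c m hne, pT2_travellingWave, pX2_travellingWave]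
    simp [travellingWave]
  · rw [discharge_travellingWave c m hne, flux_eq, pT2_travellingWave, pX2_travellingWave]
    simp only [travellingWave, deriv_add_const', deriv_const_mul_field']
    ring

-- `hH''` is the derivative of `hH'` divided by `2 * deriv H ξ`.
lemma momentumFlux_eq_of_deriv_sq_eq {E ξ : ℝ} (hne : H ξ ≠ 0)
    (hH' : m ^ 2 / 3 * deriv H ξ ^ 2 = m ^ 2 - 2 * K * H ξ + 2 * E * H ξ ^ 2 - g * H ξ ^ 3)
    (hH'' : m ^ 2 / 3 * deriv (deriv H) ξ = -K + 2 * E * H ξ - 3 / 2 * g * H ξ ^ 2) :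
    momentumFlux g m H ξ = K := by
  rw [momentumFlux, mul_sub, ← mul_div_assoc, hH', hH'']
  field_simp
  ring

end TravellingWave

section Sech

/-- The hyperbolic secant. -/
def sech (x : ℝ) : ℝ := 1 / Real.cosh x

lemma contDiff_sech {n : WithTop ℕ∞} : ContDiff ℝ n sech :=
  contDiff_const.div Real.contDiff_cosh fun x => (Real.cosh_pos x).ne'

lemma tanh_sq_eq_one_sub_sech_sq (x : ℝ) : Real.tanh x ^ 2 = 1 - sech x ^ 2 := by
  have := (Real.cosh_pos x).ne'
  rw [Real.tanh_eq_sinh_div_cosh, sech, div_pow, Real.sinh_sq]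
  field_simp

lemma hasDerivAt_sech (x : ℝ) : HasDerivAt sech (-(sech x * Real.tanh x)) x := by
  refine ((hasDerivAt_const x (1 : ℝ)).div (Real.hasDerivAt_cosh x)
    (Real.cosh_pos x).ne').congr_deriv ?_
  rw [sech, Real.tanh_eq_sinh_div_cosh]
  ring

lemma hasDerivAt_tanh (x : ℝ) : HasDerivAt Real.tanh (sech x ^ 2) x := by
  rw [funext Real.tanh_eq_sinh_div_cosh]
  refine ((Real.hasDerivAt_sinh x).div (Real.hasDerivAt_cosh x)
    (Real.cosh_pos x).ne').congr_deriv ?_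
  rw [sech, div_pow, ← sq, ← sq, Real.cosh_sq_sub_sinh_sq, one_pow]

lemma hasDerivAt_sech_sq (x : ℝ) :
    HasDerivAt (fun x => sech x ^ 2) (-2 * (sech x ^ 2 * Real.tanh x)) x := by
  refine ((hasDerivAt_sech x).pow 2).congr_deriv ?_
  ring

lemma hasDerivAt_sech_sq_mul_tanh (x : ℝ) :
    HasDerivAt (fun x => sech x ^ 2 * Real.tanh x) (3 * (sech x ^ 2) ^ 2 - 2 * sech x ^ 2) x := by
  refine ((hasDerivAt_sech_sq x).mul (hasDerivAt_tanh x)).congr_deriv ?_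
  linear_combination -2 * sech x ^ 2 * tanh_sq_eq_one_sub_sech_sq x

end Sech

section SolitaryWave

/-- The height of the solitary wave of speed `c` above the depth `hinf` at rest. -/
def solitaryAmplitude (g hinf c : ℝ) : ℝ := (c ^ 2 - g * hinf) / g

/-- The inverse width of the solitary wave of speed `c` on water of depth `hinf` at rest, with the
sign of `c`. -/
def solitaryWavenumber (g hinf c : ℝ) : ℝ := Real.sqrt (3 * (c ^ 2 - g * hinf)) / (2 * c * hinf)

/-- The depth profile `h_c` of the solitary wave of speed `c` on water of depth `hinf` at rest. -/
def solitaryProfile (g hinf c ξ : ℝ) : ℝ :=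
  hinf + solitaryAmplitude g hinf c * sech (solitaryWavenumber g hinf c * ξ) ^ 2

lemma solitaryProfile_eq (g hinf c : ℝ) :
    solitaryProfile g hinf c = fun ξ => hinf + (c ^ 2 - g * hinf) / g *
      (1 / Real.cosh (ξ / (2 * c * hinf) * Real.sqrt (3 * (c ^ 2 - g * hinf)))) ^ 2 := by
  funext ξ
  rw [solitaryProfile, solitaryAmplitude, solitaryWavenumber, sech,
    div_mul_comm (Real.sqrt _)]

variable {g hinf c : ℝ}

lemma contDiff_solitaryProfile {n : WithTop ℕ∞} : ContDiff ℝ n (solitaryProfile g hinf c) :=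
  contDiff_const.add <| contDiff_const.mul <|
    (contDiff_sech.comp (contDiff_const.mul contDiff_id)).pow 2

lemma solitaryProfile_pos (hg : 0 < g) (hinf_pos : 0 < hinf) (hsup : g * hinf ≤ c ^ 2) (ξ : ℝ) :
    0 < solitaryProfile g hinf c ξ :=
  add_pos_of_pos_of_nonneg hinf_pos
    (mul_nonneg (div_nonneg (sub_nonneg.2 hsup) hg.le) (sq_nonneg _))

lemma mul_solitaryAmplitude (hinf c : ℝ) (hg : g ≠ 0) :
    g * solitaryAmplitude g hinf c = c ^ 2 - g * hinf :=
  mul_div_cancel₀ _ hg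

lemma sq_mul_solitaryWavenumber_sq (hc : c ≠ 0) (hinf_ne : hinf ≠ 0) (hsup : g * hinf ≤ c ^ 2) :
    4 * (c * hinf) ^ 2 * solitaryWavenumber g hinf c ^ 2 = 3 * (c ^ 2 - g * hinf) := by
  rw [solitaryWavenumber, div_pow, Real.sq_sqrt (by linarith)]
  field_simp
  ring

lemma deriv_solitaryProfile :
    deriv (solitaryProfile g hinf c) = fun ξ =>
      -2 * solitaryAmplitude g hinf c * solitaryWavenumber g hinf c *
        (sech (solitaryWavenumber g hinf c * ξ) ^ 2 *
          Real.tanh (solitaryWavenumber g hinf c * ξ)) := by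
  funext ξ
  have hphase := (hasDerivAt_id ξ).const_mul (solitaryWavenumber g hinf c)
  refine (((((hasDerivAt_sech_sq _).comp ξ hphase).const_mul _).const_add _).congr_deriv ?_).deriv
  simp only [id]
  ring

lemma deriv_deriv_solitaryProfile (ξ : ℝ) :
    deriv (deriv (solitaryProfile g hinf c)) ξ =
      2 * solitaryAmplitude g hinf c * solitaryWavenumber g hinf c ^ 2 *
        (2 * sech (solitaryWavenumber g hinf c * ξ) ^ 2 -
          3 * (sech (solitaryWavenumber g hinf c * ξ) ^ 2) ^ 2) := by
  rw [deriv_solitaryProfile]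
  have hphase := (hasDerivAt_id ξ).const_mul (solitaryWavenumber g hinf c)
  refine ((((hasDerivAt_sech_sq_mul_tanh _).comp ξ hphase).const_mul _).congr_deriv ?_).deriv
  simp only [id]
  ring

lemma mul_deriv_solitaryProfile_sq (hg : g ≠ 0) (hc : c ≠ 0) (hinf_ne : hinf ≠ 0)
    (hsup : g * hinf ≤ c ^ 2) (ξ : ℝ) :
    (c * hinf) ^ 2 / 3 * deriv (solitaryProfile g hinf c) ξ ^ 2 =
      (solitaryProfile g hinf c ξ - hinf) ^ 2 * (c ^ 2 - g * solitaryProfile g hinf c ξ) := by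
  have hamp := mul_solitaryAmplitude hinf c hg
  have hwave := sq_mul_solitaryWavenumber_sq hc hinf_ne hsup
  have htanh := tanh_sq_eq_one_sub_sech_sq (solitaryWavenumber g hinf c * ξ)
  simp only [deriv_solitaryProfile, solitaryProfile]
  generalize solitaryAmplitude g hinf c = a at hamp ⊢
  generalize solitaryWavenumber g hinf c = k at hwave htanh ⊢
  generalize sech (k * ξ) ^ 2 = s at htanh ⊢
  calc (c * hinf) ^ 2 / 3 * (-2 * a * k * (s * Real.tanh (k * ξ))) ^ 2
      = (4 * (c * hinf) ^ 2 * k ^ 2) / 3 * (a * s) ^ 2 * Real.tanh (k * ξ) ^ 2 := by ring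
    _ = (a * s) ^ 2 * (c ^ 2 - g * hinf - (c ^ 2 - g * hinf) * s) := by rw [hwave, htanh]; ring
    _ = (a * s) ^ 2 * (c ^ 2 - g * hinf - g * a * s) := by rw [hamp]
    _ = (hinf + a * s - hinf) ^ 2 * (c ^ 2 - g * (hinf + a * s)) := by ring

lemma mul_deriv_deriv_solitaryProfile (hg : g ≠ 0) (hc : c ≠ 0) (hinf_ne : hinf ≠ 0)
    (hsup : g * hinf ≤ c ^ 2) (ξ : ℝ) :
    (c * hinf) ^ 2 / 3 * deriv (deriv (solitaryProfile g hinf c)) ξ =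
      (solitaryProfile g hinf c ξ - hinf) * (c ^ 2 - g * solitaryProfile g hinf c ξ) -
        g / 2 * (solitaryProfile g hinf c ξ - hinf) ^ 2 := by
  have hamp := mul_solitaryAmplitude hinf c hg
  have hwave := sq_mul_solitaryWavenumber_sq hc hinf_ne hsup
  rw [deriv_deriv_solitaryProfile, solitaryProfile]
  generalize solitaryAmplitude g hinf c = a at hamp ⊢
  generalize solitaryWavenumber g hinf c = k at hwave ⊢
  generalize sech (k * ξ) ^ 2 = s
  calc (c * hinf) ^ 2 / 3 * (2 * a * k ^ 2 * (2 * s - 3 * s ^ 2))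
      = (4 * (c * hinf) ^ 2 * k ^ 2) / 6 * (a * s) * (2 - 3 * s) := by ring
    _ = a * s * (c ^ 2 - g * hinf - 3 / 2 * ((c ^ 2 - g * hinf) * s)) := by rw [hwave]; ring
    _ = a * s * (c ^ 2 - g * hinf - 3 / 2 * (g * a * s)) := by rw [hamp]
    _ = (hinf + a * s - hinf) * (c ^ 2 - g * (hinf + a * s)) -
          g / 2 * (hinf + a * s - hinf) ^ 2 := by ring

/-- The constant is the flux of the undisturbed stream of depth `hinf` and relative speed `-c`. -/
lemma momentumFlux_solitaryProfile (hg : 0 < g) (hinf_pos : 0 < hinf) (hsup : g * hinf ≤ c ^ 2)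
    (ξ : ℝ) :
    momentumFlux g (-c * hinf) (solitaryProfile g hinf c) ξ =
      c ^ 2 * hinf + g * hinf ^ 2 / 2 := by
  have hc : c ≠ 0 := sq_pos_iff.1 ((mul_pos hg hinf_pos).trans_le hsup)
  refine momentumFlux_eq_of_deriv_sq_eq (E := (c ^ 2 + 2 * g * hinf) / 2)
    (solitaryProfile_pos hg hinf_pos hsup ξ).ne' ?_ ?_
  · linear_combination mul_deriv_solitaryProfile_sq hg.ne' hc hinf_pos.ne' hsup ξ
  · linear_combination mul_deriv_deriv_solitaryProfile hg.ne' hc hinf_pos.ne' hsup ξ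

theorem sgn1d_solitary_wave_is_solution_general (hg : 0 < g) (hinf_pos : 0 < hinf)
    (hsup : g * hinf ≤ c ^ 2) :
    IsSGNSolution g (travellingWave c (solitaryProfile g hinf c))
      (travellingWave c fun ξ => c + -c * hinf / solitaryProfile g hinf c ξ) :=
  isSGNSolution_travellingWave c contDiff_solitaryProfile
    (solitaryProfile_pos hg hinf_pos hsup) (momentumFlux_solitaryProfile hg hinf_pos hsup)

end SolitaryWave

/-- The solitary wave `h(t,x) = h_c(x − ct)`, `u(t,x) = u_c(x − ct)`, with
`h_c(ξ) = h_∞ + ((c² − gh_∞)/g) sech²((ξ/(2ch_∞))√(3(c² − gh_∞)))` and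
`u_c = c + m/h_c`, `m = −ch_∞`, is a smooth solution of the 1D Serre–Green–Naghdi
equations `hₜ + (hu)ₓ = 0` and `(hu)ₜ + (hu² + p)ₓ = 0` with
`p = gh²/2 + (h²/3)ḧ`. -/
theorem sgn1d_solitary_wave_is_solution
    (g hinf c : ℝ) (hg : 0 < g) (hinf_pos : 0 < hinf) (hc_pos : 0 < c)
    (hsup : g * hinf < c ^ 2)
    (m : ℝ) (m_def : m = -c * hinf)
    (hc uc : ℝ → ℝ)
    (hc_def : hc = fun ξ => hinf + (c ^ 2 - g * hinf) / g *
      (1 / Real.cosh (ξ / (2 * c * hinf) * Real.sqrt (3 * (c ^ 2 - g * hinf)))) ^ 2)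
    (uc_def : uc = fun ξ => c + m / hc ξ)
    (h u : ℝ → ℝ → ℝ)
    (h_def : h = fun t x => hc (x - c * t))
    (u_def : u = fun t x => uc (x - c * t))
    (hdot : ℝ → ℝ → ℝ)
    (hdot_def : hdot = fun t x => pT2 h t x + u t x * pX2 h t x)
    (hddot : ℝ → ℝ → ℝ)
    (hddot_def : hddot = fun t x => pT2 hdot t x + u t x * pX2 hdot t x)
    (p : ℝ → ℝ → ℝ)
    (p_def : p = fun t x => g * (h t x) ^ 2 / 2 + (h t x) ^ 2 / 3 * hddot t x) :
    Smooth2 h ∧ Smooth2 u ∧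
    (∀ t x, pT2 h t x + pX2 (fun t x => h t x * u t x) t x = 0) ∧
    (∀ t x, pT2 (fun t x => h t x * u t x) t x
      + pX2 (fun t x => h t x * (u t x) ^ 2 + p t x) t x = 0) := by
  obtain rfl : hc = solitaryProfile g hinf c := hc_def.trans (solitaryProfile_eq g hinf c).symm
  have hsol := sgn1d_solitary_wave_is_solution_general hg hinf_pos hsup.le
  subst p_def hddot_def hdot_def u_def h_def uc_def m_def
  exact ⟨hsol.smooth_depth, hsol.smooth_velocity, hsol.mass_eq, hsol.momentum_eq⟩
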